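/- Let (M, Ω, V) be a graded von Neumann algebra with modular conjugation J. Then: (i) if x ∈ Z(M, V) has polar decomposition x = u|x|, then the partial isometry u lies in Z(M, V) and |x| lies in Z(M)^γ; (ii) if Ad_V is an inner action on M, i.e. there exists a unitary u ∈ M with V y V = u y u* for all y ∈ M, then Z(M, V) = u · Z(M). -/

import Mathlib

open scoped InnerProductSpace ComplexOrder

noncomputable section

variable {H : Type*} [NormedAddCommGroup H] [InnerProductSpace ℂ H] [CompleteSpace H]

/-- A graded von Neumann algebra in standard form: a von Neumann algebra `M` with a cyclic
and separating vector `Ω`, the associated modular data `(J, Δ^{it})` (characterized by the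
Tomita-Takesaki relations below), and a `ℤ₂`-grading `V`. -/
structure GradedVN (H : Type*) [NormedAddCommGroup H] [InnerProductSpace ℂ H]
    [CompleteSpace H] where
  M : VonNeumannAlgebra H
  Ω : H
  cyclic : Dense {ξ : H | ∃ x ∈ M, x Ω = ξ}
  separating : ∀ x ∈ M, x Ω = 0 → x = 0
  /-- the modular conjugation (an antiunitary involution) -/
  J : H → H
  J_add : ∀ ξ η, J (ξ + η) = J ξ + J η
  J_smul : ∀ (c : ℂ) (ξ), J (c • ξ) = starRingEnd ℂ c • J ξ
  J_inner : ∀ ξ η, ⟪J ξ, J η⟫_ℂ = ⟪η, ξ⟫_ℂ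
  J_invol : ∀ ξ, J (J ξ) = ξ
  J_Ω : J Ω = Ω
  /-- the modular group `Δ^{it}` -/
  U : ℝ → H ≃ₗᵢ[ℂ] H
  U_zero : ∀ ξ, U 0 ξ = ξ
  U_add : ∀ s t ξ, U (s + t) ξ = U s (U t ξ)
  U_cont : ∀ ξ, Continuous fun t : ℝ => U t ξ
  U_Ω : ∀ t, U t Ω = Ω
  J_U : ∀ t ξ, J (U t ξ) = U t (J ξ)
  flow_mem : ∀ t : ℝ, ∀ x ∈ M, ∃ y ∈ M, ∀ ξ, y ξ = U t (x (U (-t) ξ))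
  /-- `J M J ⊆ M'` -/
  tomita : ∀ x ∈ M, ∀ y ∈ M, ∀ ξ, J (x (J (y ξ))) = y (J (x (J ξ)))
  /-- `S = J Δ^{1/2}` maps `xΩ` to `x*Ω`, expressed via analytic continuation of the
  modular group. -/
  S_cond : ∀ x ∈ M, ∀ f : ℂ → H, Differentiable ℂ f → (∀ t : ℝ, f (t : ℂ) = U t (x Ω)) →
    J (f (-(Complex.I) / 2)) = star x Ω
  /-- the grading -/
  V : H →L[ℂ] H
  V_star : star V = V
  V_invol : ∀ ξ, V (V ξ) = ξ
  V_Ω : V Ω = Ω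
  V_mem : ∀ x ∈ M, ∃ y ∈ M, ∀ ξ, y ξ = V (x (V ξ))

namespace GradedVN

variable (N : GradedVN H)

/-- The `V`-twisted center `Z(M, V) = {x ∈ M | J x* J = x V}`. -/
def twistedCenter : Set (H →L[ℂ] H) :=
  {x | x ∈ N.M ∧ ∀ ξ, N.J (star x (N.J ξ)) = x (N.V ξ)}

/-- The center `Z(M)` of `M`. -/
def centerSet : Set (H →L[ℂ] H) :=
  {z | z ∈ N.M ∧ ∀ y ∈ N.M, z * y = y * z}

/-- The `Ad_V`-fixed points `M^γ`. -/
def gammaFixed : Set (H →L[ℂ] H) :=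
  {x | x ∈ N.M ∧ ∀ ξ, N.V (x (N.V ξ)) = x ξ}

/-- The fixed points `M^α` of the modular flow. -/
def flowFixed : Set (H →L[ℂ] H) :=
  {x | x ∈ N.M ∧ ∀ (t : ℝ) (ξ), x (N.U t ξ) = N.U t (x ξ)}

/-- The centralizer `Z_Ω(M)`. -/
def centralizerSet : Set (H →L[ℂ] H) :=
  {x | x ∈ N.M ∧ ∀ y ∈ N.M, ⟪N.Ω, x (y N.Ω)⟫_ℂ = ⟪N.Ω, y (x N.Ω)⟫_ℂ}

/-- The twisted center of the reduced algebra `(M_p, V_p)` for a central `Ad_V`-invariant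
projection `p` (for such `p`, the modular conjugation of `(pMp, pΩ)` is `J` restricted
to `pH`, so the relative twisted center consists of the `p`-supported elements of `M`
satisfying the twisted-center relation). -/
def tcRel (p : H →L[ℂ] H) : Set (H →L[ℂ] H) :=
  {x | x ∈ N.M ∧ x * p = x ∧ p * x = x ∧ ∀ ξ, N.J (star x (N.J ξ)) = x (N.V ξ)}

/-- `p` is an `Ad_V`-invariant central projection. -/
def IsCentralInvProj (p : H →L[ℂ] H) : Prop :=
  p ∈ N.centerSet ∧ star p = p ∧ p * p = p ∧ ∀ ξ, N.V (p (N.V ξ)) = p ξ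

/-- `p` is an `Ad_V`-invariant central projection carrying a partial isometry in the
relative twisted center which is unitary on `pH`. -/
def HasPI (p : H →L[ℂ] H) : Prop :=
  N.IsCentralInvProj p ∧ ∃ u ∈ N.tcRel p, star u * u = p ∧ u * star u = p

/-- Asymptotically abelian modular flow: `[α_t(x), y] → 0` weakly as `t → ∞`. -/
def AsympAbelian : Prop :=
  ∀ x ∈ N.M, ∀ y ∈ N.M, ∀ ξ η : H,
    Filter.Tendsto
      (fun t : ℝ => ⟪ξ, N.U t (x (N.U (-t) (y η))) - y (N.U t (x (N.U (-t) η)))⟫_ℂ)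
      Filter.atTop (nhds 0)

/-- `V`-graded asymptotically abelian modular flow:
`[α_t(x), y]_V = α_t(x) y − (V y V) α_t(x) → 0` weakly as `t → ∞`. -/
def GradedAsympAbelian : Prop :=
  ∀ x ∈ N.M, ∀ y ∈ N.M, ∀ ξ η : H,
    Filter.Tendsto
      (fun t : ℝ =>
        ⟪ξ, N.U t (x (N.U (-t) (y η))) - N.V (y (N.V (N.U t (x (N.U (-t) η)))))⟫_ℂ)
      Filter.atTop (nhds 0)

end GradedVN

/-!
The twisted center is `Z(M, V) = {x ∈ M : x V ∈ M'}`. One inclusion is `J M J ⊆ M'`. For the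
other, let `x ∈ M` with `x V ∈ M'`. A C⋆-identity shows that `x` commutes with `V`, and then `x`
lies in the centralizer of the state of `Ω`. The vector `x Ω` is then `Δ`-invariant: after Gaussian
smoothing the orbit `z ↦ Δ^{iz} x Ω` is entire, and the centralizer property makes
`z ↦ ⟪x Ω, Δ^{iz} x Ω⟫` periodic with period `i`, hence bounded, hence constant by Liouville.
So `J x Ω = x⋆ Ω`, and the cyclicity of `Ω` upgrades this to `J x⋆ J = x V`.

Both assertions follow from this description by computing in `M` and in `M'`: the polar
decomposition of `x V` is `(u V) |x|`, and in the inner case `u V` is a unitary of `M'`.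
-/

open MeasureTheory ProbabilityTheory Filter Topology

section EntireFunctions

variable {E : Type*} [NormedAddCommGroup E] [NormedSpace ℂ E]

theorem eq_of_differentiable_of_eq_ofReal [CompleteSpace E] {f g : ℂ → E}
    (hf : Differentiable ℂ f) (hg : Differentiable ℂ g) (h : ∀ t : ℝ, f t = g t) : f = g := by
  have hfa : AnalyticOnNhd ℂ f Set.univ := fun z _ => hf.analyticAt z
  have hga : AnalyticOnNhd ℂ g Set.univ := fun z _ => hg.analyticAt z
  have hreal : Tendsto ((↑) : ℝ → ℂ) (𝓝[≠] 0) (𝓝[≠] 0) :=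
    Complex.continuous_ofReal.continuousWithinAt.tendsto_nhdsWithin fun t ht => by simpa using ht
  exact hfa.eq_of_frequently_eq (z₀ := 0) hga (hreal.frequently (Frequently.of_forall h))

theorem apply_eq_apply_of_periodic_I_of_norm_le {f : ℂ → E} (hf : Differentiable ℂ f)
    (hper : Function.Periodic f Complex.I) {b : ℝ → ℝ} (hb : Continuous b)
    (hfb : ∀ z, ‖f z‖ ≤ b z.im) (z w : ℂ) : f z = f w := by
  obtain ⟨C, hC⟩ := (isCompact_Icc (a := (0 : ℝ)) (b := 1)).bddAbove_image hb.continuousOn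
  refine hf.apply_eq_apply_of_bounded (isBounded_iff_forall_norm_le.2 ⟨C, ?_⟩) z w
  rintro _ ⟨z, rfl⟩
  calc ‖f z‖ = ‖f (z - ⌊z.im⌋ • Complex.I)‖ := by rw [hper.sub_zsmul_eq]
    _ ≤ b (z - ⌊z.im⌋ • Complex.I).im := hfb _
    _ = b (Int.fract z.im) := by simp
    _ ≤ C := hC ⟨_, ⟨Int.fract_nonneg _, (Int.fract_lt_one _).le⟩, rfl⟩

end EntireFunctions

section GaussianSmoothing

variable {E : Type*} [NormedAddCommGroup E]

theorem differentiable_integral_cexp_mul_smul [NormedSpace ℂ E] {α : Type*} [MeasurableSpace α]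
    {μ : Measure α} {X : α → ℝ} (hX : ∀ t : ℝ, Integrable (fun a => Real.exp (t * X a)) μ)
    {W : α → E} (hW : AEStronglyMeasurable W μ) {C : ℝ} (hC : ∀ a, ‖W a‖ ≤ C) :
    Differentiable ℂ fun z : ℂ => ∫ a, Complex.exp (z * X a) • W a ∂μ := by
  intro z₀
  set R := ‖z₀‖ + 1
  have hXm : AEMeasurable X μ := aemeasurable_of_integrable_exp_mul one_ne_zero (hX 1) (hX 0)
  have hmeas : ∀ z : ℂ, AEStronglyMeasurable (fun a => Complex.exp (z * X a)) μ := fun z =>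
    (by fun_prop : AEMeasurable (fun a => Complex.exp (z * X a)) μ).aestronglyMeasurable
  have hexp : Integrable (fun a => Complex.exp (z₀ * X a)) μ :=
    (hX z₀.re).mono (hmeas z₀) (ae_of_all _ fun a => by simp [Complex.norm_exp])
  have hbound : Integrable (fun a => |X a| * Real.exp (R * |X a|)) μ := by
    simpa using integrable_pow_abs_mul_exp_add_of_integrable_exp_mul (v := 0) (t := R + 1)
      (hX _) (hX _) (by positivity) (lt_of_lt_of_le (lt_add_one R) (le_abs_self _)) 1
  refine (hasDerivAt_integral_of_dominated_loc_of_deriv_le (Metric.ball_mem_nhds z₀ one_pos)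
    (F' := fun z a => (Complex.exp (z * X a) * X a) • W a)
    (.of_forall fun z => (hmeas z).smul hW) (hexp.smul_bdd C hW (ae_of_all _ hC))
    (((hmeas z₀).mul (by fun_prop)).smul hW) (ae_of_all _ fun a z hz => ?_)
    (hbound.mul_const C) (ae_of_all _ fun a z _ => ?_)).2.differentiableAt
  · have hzR : z.re * X a ≤ R * |X a| := by
      calc z.re * X a ≤ |z.re| * |X a| := by rw [← abs_mul]; exact le_abs_self _
        _ ≤ R * |X a| := by
          gcongr
          exact (Complex.abs_re_le_norm z).trans (norm_lt_of_mem_ball hz).le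
    calc ‖(Complex.exp (z * X a) * X a) • W a‖ = |X a| * Real.exp (z.re * X a) * ‖W a‖ := by
          simp [norm_smul, Complex.norm_exp, mul_comm]
      _ ≤ |X a| * Real.exp (R * |X a|) * C := by gcongr; exact hC a
  · have := ((hasDerivAt_id z).mul_const (X a : ℂ)).cexp
    simpa using this.smul_const (W a)

theorem integral_gaussianReal_add [NormedSpace ℝ E] (g : ℝ → E) (r : ℝ) :
    ∫ s, g (s + r) ∂gaussianReal 0 1 =
      ∫ s, Real.exp (r * s - r ^ 2 / 2) • g s ∂gaussianReal 0 1 := by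
  rw [integral_gaussianReal_eq_integral_smul one_ne_zero,
    integral_gaussianReal_eq_integral_smul one_ne_zero,
    ← integral_sub_right_eq_self (fun s => gaussianPDFReal 0 1 s • g (s + r)) r]
  refine integral_congr_ae (ae_of_all _ fun s => ?_)
  simp only [sub_add_cancel, smul_smul, gaussianPDFReal, mul_assoc, ← Real.exp_add]
  congr 3
  simp only [sub_zero, NNReal.coe_one, mul_one]
  ring

/-- The average of the curve `W` against a Gaussian of standard deviation `|ε|`: an approximate
identity, written at unit variance so that `ε = 0` is allowed and returns `W 0`. -/
def gaussianSmoothing [NormedSpace ℝ E] (W : ℝ → E) (ε : ℝ) : E :=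
  ∫ s, W (ε * s) ∂gaussianReal 0 1

theorem gaussianSmoothing_zero [NormedSpace ℝ E] [CompleteSpace E] (W : ℝ → E) :
    gaussianSmoothing W 0 = W 0 := by
  simp [gaussianSmoothing]

theorem continuous_gaussianSmoothing [NormedSpace ℝ E] {W : ℝ → E} (hW : Continuous W) {C : ℝ}
    (hC : ∀ s, ‖W s‖ ≤ C) : Continuous (gaussianSmoothing W) :=
  continuous_of_dominated
    (fun ε => (by fun_prop : Continuous fun s => W (ε * s)).aestronglyMeasurable)
    (fun ε => ae_of_all _ fun s => hC (ε * s)) (integrable_const C)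
    (ae_of_all _ fun s => by fun_prop)

end GaussianSmoothing

section UnitaryGroup

variable {E : Type*} [NormedAddCommGroup E] [InnerProductSpace ℂ E]

/-- A strongly continuous one-parameter unitary group, such as a modular group `t ↦ Δ^{it}`. -/
structure IsUnitaryGroup (U : ℝ → E ≃ₗᵢ[ℂ] E) : Prop where
  zero_apply : ∀ ξ, U 0 ξ = ξ
  add_apply : ∀ s t ξ, U (s + t) ξ = U s (U t ξ)
  continuous_apply : ∀ ξ, Continuous fun t => U t ξ

/-- `f` extends the orbit `t ↦ U t ξ` to an entire function. For `U t = Δ^{it}` this means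
`f z = Δ^{iz} ξ`, so that `f (-i/2) = Δ^{1/2} ξ`. -/
structure IsEntireOrbit (U : ℝ → E ≃ₗᵢ[ℂ] E) (ξ : E) (f : ℂ → E) : Prop where
  differentiable : Differentiable ℂ f
  apply_ofReal : ∀ t : ℝ, f t = U t ξ

namespace IsUnitaryGroup

variable {U : ℝ → E ≃ₗᵢ[ℂ] E}

theorem apply_neg_apply (hU : IsUnitaryGroup U) (t : ℝ) (ξ : E) : U t (U (-t) ξ) = ξ := by
  rw [← hU.add_apply, add_neg_cancel, hU.zero_apply]

theorem inner_apply_right (hU : IsUnitaryGroup U) (t : ℝ) (ξ η : E) :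
    ⟪ξ, U t η⟫_ℂ = ⟪U (-t) ξ, η⟫_ℂ := by
  rw [← (U t).inner_map_map (U (-t) ξ), hU.apply_neg_apply]

theorem continuous_apply_comp (hU : IsUnitaryGroup U) {g : ℝ → E} (hg : Continuous g) :
    Continuous fun s => U s (g s) := by
  refine continuous_iff_continuousAt.2 fun s₀ => ?_
  have hsmall : Tendsto (fun s => U s (g s - g s₀)) (𝓝 s₀) (𝓝 0) := by
    rw [tendsto_zero_iff_norm_tendsto_zero]
    simp only [LinearIsometryEquiv.norm_map]
    rw [← tendsto_zero_iff_norm_tendsto_zero]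
    exact tendsto_sub_nhds_zero_iff.2 (hg.tendsto s₀)
  simpa using! hsmall.add ((hU.continuous_apply (g s₀)).tendsto s₀)

theorem apply_gaussianSmoothing_orbit [CompleteSpace E] (hU : IsUnitaryGroup U) (ξ : E) {ε : ℝ}
    (hε : ε ≠ 0) (t : ℝ) :
    U t (gaussianSmoothing (fun s => U s ξ) ε) =
      ∫ s, Real.exp (t / ε * s - (t / ε) ^ 2 / 2) • U (ε * s) ξ ∂gaussianReal 0 1 := by
  have hinteg : Integrable (fun s => U (ε * s) ξ) (gaussianReal 0 1) :=
    .of_bound ((hU.continuous_apply ξ).comp (continuous_const_mul ε)).aestronglyMeasurable ‖ξ‖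
      (ae_of_all _ fun s => by simp)
  calc U t (gaussianSmoothing (fun s => U s ξ) ε)
      = ∫ s, U t (U (ε * s) ξ) ∂gaussianReal 0 1 :=
        ((U t).toContinuousLinearEquiv.toContinuousLinearMap.integral_comp_comm hinteg).symm
    _ = ∫ s, U (ε * (s + t / ε)) ξ ∂gaussianReal 0 1 := by
        simp only [← hU.add_apply, mul_add, mul_div_cancel₀ t hε, add_comm t]
    _ = _ := integral_gaussianReal_add (fun s => U (ε * s) ξ) (t / ε)

theorem exists_isEntireOrbit_gaussianSmoothing [CompleteSpace E] (hU : IsUnitaryGroup U) (ξ : E)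
    {ε : ℝ} (hε : ε ≠ 0) : ∃ f, IsEntireOrbit U (gaussianSmoothing (fun s => U s ξ) ε) f := by
  have hF : Differentiable ℂ fun z : ℂ =>
      ∫ s : ℝ, Complex.exp (z * s) • U (ε * s) ξ ∂gaussianReal 0 1 :=
    differentiable_integral_cexp_mul_smul (fun t => integrable_exp_mul_gaussianReal t)
      ((hU.continuous_apply ξ).comp (continuous_const_mul ε)).aestronglyMeasurable
      (fun s => ((U (ε * s)).norm_map ξ).le)
  have hdiv : Differentiable ℂ fun z : ℂ => z / ε := by fun_prop
  refine ⟨fun z => Complex.exp (-(z / ε) ^ 2 / 2) •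
    ∫ s : ℝ, Complex.exp (z / ε * s) • U (ε * s) ξ ∂gaussianReal 0 1, ?_, fun t => ?_⟩
  · exact (by fun_prop : Differentiable ℂ fun z : ℂ => Complex.exp (-(z / ε) ^ 2 / 2)).smul
      (hF.comp hdiv)
  · rw [hU.apply_gaussianSmoothing_orbit ξ hε, ← integral_smul]
    refine integral_congr_ae (ae_of_all _ fun s => ?_)
    simp only [smul_smul, ← Complex.exp_add, ← Complex.coe_smul (Real.exp _), Complex.ofReal_exp]
    congr 2
    push_cast
    ring

end IsUnitaryGroup

namespace IsEntireOrbit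

variable {U : ℝ → E ≃ₗᵢ[ℂ] E} {ξ : E} {f : ℂ → E}

theorem apply_zero (hU : IsUnitaryGroup U) (hf : IsEntireOrbit U ξ f) : f 0 = ξ := by
  simpa [hU.zero_apply] using hf.apply_ofReal 0

theorem comp_add_ofReal (hU : IsUnitaryGroup U) (hf : IsEntireOrbit U ξ f) (t : ℝ) :
    IsEntireOrbit U (U t ξ) fun z => f (z + t) where
  differentiable := hf.differentiable.comp (by fun_prop)
  apply_ofReal s := by rw [← hU.add_apply, ← hf.apply_ofReal, Complex.ofReal_add]

variable [CompleteSpace E]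

theorem apply_add_ofReal (hU : IsUnitaryGroup U) (hf : IsEntireOrbit U ξ f) (z : ℂ) (t : ℝ) :
    f (z + t) = U t (f z) := by
  refine congrFun (eq_of_differentiable_of_eq_ofReal (f := fun z => f (z + t))
    (g := fun z => U t (f z)) (hf.differentiable.comp (by fun_prop))
    ((U t).toContinuousLinearEquiv.differentiable.comp hf.differentiable) fun s => ?_) z
  rw [hf.apply_ofReal, ← hU.add_apply, add_comm t s, ← hf.apply_ofReal, Complex.ofReal_add]

theorem inner_apply_conj (hU : IsUnitaryGroup U) (hf : IsEntireOrbit U ξ f) (a b : ℂ) :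
    ⟪f (starRingEnd ℂ a), f b⟫_ℂ = ⟪ξ, f (b - a)⟫_ℂ := by
  have hinner (η : E) : Differentiable ℂ fun z => ⟪η, f z⟫_ℂ :=
    (innerSL ℂ η).differentiable.comp hf.differentiable
  have hconj : Differentiable ℂ fun a => ⟪f (starRingEnd ℂ a), f b⟫_ℂ := fun a => by
    simpa [Function.comp_def] using
      DifferentiableAt.conj_conj (hinner (f b) (starRingEnd ℂ a))
  refine congrFun (eq_of_differentiable_of_eq_ofReal (g := fun a => ⟪ξ, f (b - a)⟫_ℂ) hconj
    ((hinner ξ).comp (by fun_prop)) fun s => ?_) a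
  rw [Complex.conj_ofReal, hf.apply_ofReal, ← (U s).inner_map_map ξ, ← hf.apply_add_ofReal hU,
    sub_add_cancel]

theorem norm_apply (hU : IsUnitaryGroup U) (hf : IsEntireOrbit U ξ f) (z : ℂ) :
    ‖f z‖ = ‖f (z.im * Complex.I)‖ := by
  rw [← (U z.re).norm_map (f (z.im * Complex.I)), ← hf.apply_add_ofReal hU, add_comm,
    Complex.re_add_im]

theorem apply_eq_self_of_inner_shift (hU : IsUnitaryGroup U) (hf : IsEntireOrbit U ξ f)
    (h : ∀ t : ℝ, ⟪ξ, f t⟫_ℂ = ⟪f (-Complex.I / 2), f (t + -Complex.I / 2)⟫_ℂ) (t : ℝ) :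
    U t ξ = ξ := by
  have hdiff : Differentiable ℂ fun z => ⟪ξ, f z⟫_ℂ :=
    (innerSL ℂ ξ).differentiable.comp hf.differentiable
  have hshift : (fun z => ⟪ξ, f z⟫_ℂ) = fun z => ⟪ξ, f (z - Complex.I)⟫_ℂ := by
    refine eq_of_differentiable_of_eq_ofReal hdiff (hdiff.comp (by fun_prop)) fun s => ?_
    have hconj : starRingEnd ℂ (Complex.I / 2) = -Complex.I / 2 := by simp [map_ofNat]
    rw [h, ← hconj, hf.inner_apply_conj hU, hconj]
    ring_nf
  have hper : Function.Periodic (fun z => ⟪ξ, f z⟫_ℂ) Complex.I := fun z => by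
    simpa using congrFun hshift (z + Complex.I)
  have hcont := hf.differentiable.continuous
  have hconst := apply_eq_apply_of_periodic_I_of_norm_le hdiff hper
    (b := fun y => ‖ξ‖ * ‖f (y * Complex.I)‖) (by fun_prop)
    (fun z => (norm_inner_le_norm _ _).trans_eq (by rw [hf.norm_apply hU z])) t 0
  simp only [hf.apply_ofReal, hf.apply_zero hU] at hconst
  refine (eq_of_norm_le_re_inner_eq_norm_sq (𝕜 := ℂ) (by simp) ?_).symm
  rw [hconst, (U t).norm_map, inner_self_eq_norm_sq]

end IsEntireOrbit

end UnitaryGroup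

section OperatorAlgebra

theorem commute_of_nonneg_of_commute_mul_self {A : Type*} [NonUnitalCStarAlgebra A]
    [PartialOrder A] [StarOrderedRing A] {m b : A} (hm : 0 ≤ m) (h : Commute (m * m) b) :
    Commute m b := by
  rw [← CFC.sqrt_mul_self m hm]
  exact h.cfcₙ_nnreal _

theorem commute_of_commute_mul_star {A : Type*} [CStarAlgebra A] [PartialOrder A]
    [StarOrderedRing A] {v x : A} (hv : star v = v) (hvv : v * v = 1)
    (hx : Commute (x * v) (star x)) (hvx : Commute (x * v) (v * star x * v)) : Commute v x := by
  have hvv' (y : A) : v * (v * y) = y := by rw [← mul_assoc, hvv, one_mul]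
  set a := v * x * v with ha
  have hstar : star a = v * star x * v := by simp [ha, hv, mul_assoc]
  have hxa : x * star a = star x * x := by
    simpa [hstar, mul_assoc, hvv] using congrArg (· * v) hx.eq
  have hax : star a * x = x * star x := by
    simpa [hstar, mul_assoc, hvv, hvv'] using congrArg (· * v) hvx.eq.symm
  have hax' : a * star x = star x * x := by simpa using congrArg star hxa
  have hxa' : star x * a = x * star x := by simpa using congrArg star hax
  have haa : star a * a = star x * x := by
    rw [← hax']
    simpa [ha, hstar, hv, mul_assoc, hvv, hvv'] using congrArg (v * · * v) hxa.symm
  have haa' : a * star a = x * star x := by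
    rw [← hxa']
    simpa [ha, hstar, hv, mul_assoc, hvv, hvv'] using congrArg (v * · * v) hax.symm
  have hsum : star (a - x) * (a - x) + (a - x) * star (a - x) = 0 := by
    simp only [star_sub, sub_mul, mul_sub, haa, haa', hax, hxa, hax', hxa']
    abel
  have hzero : star (a - x) * (a - x) = 0 :=
    ((add_eq_zero_iff_of_nonneg (star_mul_self_nonneg _) (mul_star_self_nonneg _)).1 hsum).1
  have hfix : a = x := sub_eq_zero.1 (CStarRing.star_mul_self_eq_zero_iff _ |>.1 hzero)
  calc v * x = v * x * (v * v) := by rw [hvv, mul_one]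
    _ = x * v := by rw [← mul_assoc, ← ha, hfix]

variable {E : Type*} [NormedAddCommGroup E] [InnerProductSpace ℂ E] [CompleteSpace E]

theorem eq_of_mul_eq_of_eqOn_ker {m a b : E →L[ℂ] E} (hm : IsSelfAdjoint m)
    (hmul : a * m = b * m) (hker : ∀ ξ, m ξ = 0 → a ξ = b ξ) : a = b := by
  let K := (a - b).ker
  have hrange : m.range ≤ K := by
    rintro _ ⟨ζ, rfl⟩
    simpa [K, sub_eq_zero] using congr($hmul ζ)
  have hperp : Kᗮ ≤ K := fun ξ hξ => by
    have hmem := Submodule.orthogonal_le hrange hξ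
    rw [m.orthogonal_range, hm.adjoint_eq] at hmem
    simpa [K, sub_eq_zero] using hker ξ hmem
  have : CompleteSpace K := (a - b).isClosed_ker.completeSpace_coe
  have htop : K = ⊤ := Submodule.orthogonal_eq_bot_iff.1 (by
    rw [← inf_eq_right.2 hperp, Submodule.inf_orthogonal_eq_bot])
  ext ξ
  have hξ : ξ ∈ K := htop ▸ Submodule.mem_top
  simpa [K, sub_eq_zero] using hξ

variable (S : VonNeumannAlgebra E)

theorem mem_of_forall_mem_commutant {y : E →L[ℂ] E} (h : ∀ a ∈ S.commutant, Commute a y) :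
    y ∈ S := by
  rw [← S.commutant_commutant]
  exact VonNeumannAlgebra.mem_commutant_iff.2 h

theorem mem_of_isPositive_of_mul_self_mem {m : E →L[ℂ] E} (hm : m.IsPositive)
    (hmm : m * m ∈ S) : m ∈ S :=
  mem_of_forall_mem_commutant S fun _ ha =>
    (commute_of_nonneg_of_commute_mul_self (m.nonneg_iff_isPositive.2 hm)
      (VonNeumannAlgebra.mem_commutant_iff.1 ha _ hmm)).symm

theorem polar_factor_mem {x u m : E →L[ℂ] E} (hx : x ∈ S) (hm : m.IsPositive)
    (hmm : m * m = star x * x) (hxu : x = u * m) (hu : ∀ ξ, m ξ = 0 → u ξ = 0) : u ∈ S := by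
  have hmS : m ∈ S := mem_of_isPositive_of_mul_self_mem S hm (hmm ▸ mul_mem (star_mem hx) hx)
  refine mem_of_forall_mem_commutant S fun a ha =>
    eq_of_mul_eq_of_eqOn_ker hm.isSelfAdjoint ?_ fun ξ hξ => ?_
  · have hax : x * a = a * x := VonNeumannAlgebra.mem_commutant_iff.1 ha x hx
    have ham : m * a = a * m := VonNeumannAlgebra.mem_commutant_iff.1 ha m hmS
    rw [mul_assoc, ← hxu, mul_assoc, ← ham, ← mul_assoc, ← hxu, hax]
  · have hmaξ : m (a ξ) = a (m ξ) := congr($(VonNeumannAlgebra.mem_commutant_iff.1 ha m hmS) ξ)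
    simp [hu ξ hξ, hu (a ξ) (by rw [hmaξ, hξ, map_zero])]

theorem exists_mem_forall_apply_eq_integral {α : Type*} [MeasurableSpace α] {μ : Measure α}
    [IsFiniteMeasure μ] {a : α → E →L[ℂ] E} (haS : ∀ s, a s ∈ S)
    (hinteg : ∀ ξ, Integrable (fun s => a s ξ) μ) {C : ℝ} (hC : ∀ s, ‖a s‖ ≤ C) :
    ∃ y ∈ S, ∀ ξ, y ξ = ∫ s, a s ξ ∂μ := by
  let L : E →ₗ[ℂ] E :=
    { toFun := fun ξ => ∫ s, a s ξ ∂μ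
      map_add' := fun ξ η => by simp only [map_add, integral_add (hinteg ξ) (hinteg η)]
      map_smul' := fun c ξ => by simp only [map_smul, integral_smul, RingHom.id_apply] }
  have hbound : ∀ ξ, ‖L ξ‖ ≤ C * μ.real Set.univ * ‖ξ‖ := fun ξ => by
    rw [mul_right_comm]
    exact norm_integral_le_of_norm_le_const (ae_of_all _ fun s => (a s).le_of_opNorm_le (hC s) ξ)
  refine ⟨L.mkContinuous _ hbound, mem_of_forall_mem_commutant S fun b hb => ?_, fun _ => rfl⟩
  ext ξ
  change b (∫ s, a s ξ ∂μ) = ∫ s, a s (b ξ) ∂μ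
  rw [← b.integral_comp_comm (hinteg ξ)]
  exact integral_congr_ae (ae_of_all _ fun s =>
    congr($(VonNeumannAlgebra.mem_commutant_iff.1 hb _ (haS s)) ξ).symm)

end OperatorAlgebra

namespace GradedVN

variable (N : GradedVN H)

section ModularFlow

theorem isUnitaryGroup_U : IsUnitaryGroup N.U := ⟨N.U_zero, N.U_add, N.U_cont⟩

theorem continuous_J : Continuous N.J := by
  have hnorm (ξ : H) : ‖N.J ξ‖ = ‖ξ‖ := by
    rw [norm_eq_sqrt_re_inner (𝕜 := ℂ), N.J_inner, ← norm_eq_sqrt_re_inner]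
  exact (AddMonoidHomClass.isometry_of_norm (AddMonoidHom.mk' N.J N.J_add) hnorm).continuous

theorem inner_Ω_U (t : ℝ) (ξ : H) : ⟪N.Ω, N.U t ξ⟫_ℂ = ⟪N.Ω, ξ⟫_ℂ := by
  rw [N.isUnitaryGroup_U.inner_apply_right, N.U_Ω]

/-- The modular flow `x ↦ Δ^{it} x Δ^{-it}`, defined on all bounded operators. -/
def flow (t : ℝ) (x : H →L[ℂ] H) : H →L[ℂ] H :=
  (N.U t : H →L[ℂ] H) ∘L x ∘L (N.U (-t) : H →L[ℂ] H)

theorem flow_apply (t : ℝ) (x : H →L[ℂ] H) (ξ : H) :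
    N.flow t x ξ = N.U t (x (N.U (-t) ξ)) := rfl

theorem flow_apply_Ω (t : ℝ) (x : H →L[ℂ] H) : N.flow t x N.Ω = N.U t (x N.Ω) := by
  rw [flow_apply, N.U_Ω]

theorem flow_mem_M (t : ℝ) {x : H →L[ℂ] H} (hx : x ∈ N.M) : N.flow t x ∈ N.M := by
  obtain ⟨y, hy, hyx⟩ := N.flow_mem t x hx
  exact (ContinuousLinearMap.ext hyx : y = N.flow t x) ▸ hy

theorem norm_flow_le (t : ℝ) (x : H →L[ℂ] H) : ‖N.flow t x‖ ≤ ‖x‖ :=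
  ContinuousLinearMap.opNorm_le_bound _ (norm_nonneg x) fun ξ => by
    simpa [flow_apply] using x.le_opNorm (N.U (-t) ξ)

theorem continuous_flow_apply (x : H →L[ℂ] H) (ξ : H) : Continuous fun t => N.flow t x ξ :=
  N.isUnitaryGroup_U.continuous_apply_comp
    (x.continuous.comp ((N.U_cont ξ).comp continuous_neg))

end ModularFlow

section Centralizer

variable {N} {x : H →L[ℂ] H}

theorem flow_mem_centralizerSet (hx : x ∈ N.centralizerSet) (t : ℝ) :
    N.flow t x ∈ N.centralizerSet := by
  refine ⟨N.flow_mem_M t hx.1, fun a ha => ?_⟩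
  calc ⟪N.Ω, N.flow t x (a N.Ω)⟫_ℂ
      = ⟪N.Ω, x (N.flow (-t) a N.Ω)⟫_ℂ := by rw [flow_apply, inner_Ω_U, flow_apply_Ω]
    _ = ⟪N.Ω, N.flow (-t) a (x N.Ω)⟫_ℂ := hx.2 _ (N.flow_mem_M _ ha)
    _ = ⟪N.Ω, a (N.flow t x N.Ω)⟫_ℂ := by
      rw [flow_apply, inner_Ω_U, neg_neg, flow_apply_Ω]

theorem exists_mem_centralizerSet_apply_Ω_eq_gaussianSmoothing (hx : x ∈ N.centralizerSet)
    (ε : ℝ) :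
    ∃ y ∈ N.centralizerSet, y N.Ω = gaussianSmoothing (fun s => N.U s (x N.Ω)) ε := by
  have hinteg (ξ : H) : Integrable (fun s => N.flow (ε * s) x ξ) (gaussianReal 0 1) :=
    .of_bound ((N.continuous_flow_apply x ξ).comp (continuous_const_mul ε)).aestronglyMeasurable
      (‖x‖ * ‖ξ‖) (ae_of_all _ fun s =>
        ContinuousLinearMap.le_of_opNorm_le _ (N.norm_flow_le _ x) ξ)
  obtain ⟨y, hyM, hy⟩ := exists_mem_forall_apply_eq_integral N.M
    (fun s => N.flow_mem_M (ε * s) hx.1) hinteg (fun s => N.norm_flow_le (ε * s) x)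
  refine ⟨y, ⟨hyM, fun a ha => ?_⟩, by simp only [hy, flow_apply_Ω, gaussianSmoothing]⟩
  rw [← a.adjoint_inner_left, hy, hy, ← integral_inner (hinteg _), ← integral_inner (hinteg _)]
  refine integral_congr_ae (ae_of_all _ fun s => ?_)
  simpa [a.adjoint_inner_left] using (flow_mem_centralizerSet hx (ε * s)).2 a ha

theorem inner_apply_Ω_of_mem_centralizerSet (hx : x ∈ N.centralizerSet) {a : H →L[ℂ] H}
    (ha : a ∈ N.M) : ⟪x N.Ω, a N.Ω⟫_ℂ = ⟪star a N.Ω, star x N.Ω⟫_ℂ := by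
  have h := congrArg (starRingEnd ℂ) (hx.2 (star a) (star_mem ha))
  simp only [inner_conj_symm, ContinuousLinearMap.star_eq_adjoint,
    ContinuousLinearMap.adjoint_inner_left] at h
  rw [ContinuousLinearMap.star_eq_adjoint, ContinuousLinearMap.star_eq_adjoint,
    ContinuousLinearMap.adjoint_inner_right, h]

theorem U_apply_Ω_of_isEntireOrbit (hx : x ∈ N.centralizerSet) {f : ℂ → H}
    (hf : IsEntireOrbit N.U (x N.Ω) f) (t : ℝ) : N.U t (x N.Ω) = x N.Ω := by
  refine hf.apply_eq_self_of_inner_shift N.isUnitaryGroup_U (fun r => ?_) t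
  have hxr := N.flow_mem_M r hx.1
  have hfr := hf.comp_add_ofReal N.isUnitaryGroup_U r
  rw [← N.flow_apply_Ω] at hfr
  have hJ : N.J (f (-Complex.I / 2)) = star x N.Ω :=
    N.S_cond x hx.1 f hf.differentiable hf.apply_ofReal
  have hJr : N.J (f (-Complex.I / 2 + r)) = star (N.flow r x) N.Ω :=
    N.S_cond _ hxr _ hfr.differentiable hfr.apply_ofReal
  rw [hf.apply_ofReal, ← N.flow_apply_Ω, inner_apply_Ω_of_mem_centralizerSet hx hxr, ← hJ, ← hJr,
    N.J_inner, add_comm]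

theorem U_apply_Ω_of_mem_centralizerSet (hx : x ∈ N.centralizerSet) (t : ℝ) :
    N.U t (x N.Ω) = x N.Ω := by
  have hsmooth : Continuous (gaussianSmoothing fun s => N.U s (x N.Ω)) :=
    continuous_gaussianSmoothing (N.U_cont _) fun s => ((N.U s).norm_map _).le
  have hinv := Continuous.ext_on (dense_compl_singleton (0 : ℝ))
    ((N.U t).continuous.comp hsmooth) hsmooth fun ε hε => by
      obtain ⟨y, hy, hyΩ⟩ := exists_mem_centralizerSet_apply_Ω_eq_gaussianSmoothing hx ε
      obtain ⟨f, hf⟩ := N.isUnitaryGroup_U.exists_isEntireOrbit_gaussianSmoothing (x N.Ω) hε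
      rw [← hyΩ] at hf
      simpa only [Function.comp_apply, hyΩ] using U_apply_Ω_of_isEntireOrbit hy hf t
  simpa [gaussianSmoothing_zero, N.U_zero] using congrFun hinv 0

theorem J_apply_Ω_of_mem_centralizerSet (hx : x ∈ N.centralizerSet) :
    N.J (x N.Ω) = star x N.Ω :=
  N.S_cond x hx.1 (fun _ => x N.Ω) (differentiable_const _)
    fun t => (U_apply_Ω_of_mem_centralizerSet hx t).symm

end Centralizer

section TwistedCenter

theorem V_mul_V : N.V * N.V = 1 := ContinuousLinearMap.ext N.V_invol

theorem V_mul_mul_V_mem {x : H →L[ℂ] H} (hx : x ∈ N.M) : N.V * x * N.V ∈ N.M := by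
  obtain ⟨y, hy, hyx⟩ := N.V_mem x hx
  exact (ContinuousLinearMap.ext hyx : y = N.V * x * N.V) ▸ hy

theorem inner_Ω_V (ξ : H) : ⟪N.Ω, N.V ξ⟫_ℂ = ⟪N.Ω, ξ⟫_ℂ := by
  rw [← ContinuousLinearMap.adjoint_inner_left, ← ContinuousLinearMap.star_eq_adjoint, N.V_star,
    N.V_Ω]

variable {N} {x : H →L[ℂ] H}

theorem mem_centerSet_iff : x ∈ N.centerSet ↔ x ∈ N.M ∧ x ∈ N.M.commutant := by
  simp only [centerSet, Set.mem_ofPred_eq, VonNeumannAlgebra.mem_commutant_iff, eq_comm]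

theorem commute_V_of_mul_V_mem_commutant (hx : x ∈ N.M) (hxV : x * N.V ∈ N.M.commutant) :
    Commute N.V x := by
  have hcomm (y) (hy : y ∈ N.M) : Commute (x * N.V) y :=
    (VonNeumannAlgebra.mem_commutant_iff.1 hxV y hy).symm
  exact commute_of_commute_mul_star N.V_star N.V_mul_V (hcomm _ (star_mem hx))
    (hcomm _ (N.V_mul_mul_V_mem (star_mem hx)))

theorem mem_centralizerSet_of_mul_V_mem_commutant (hx : x ∈ N.M)
    (hxV : x * N.V ∈ N.M.commutant) : x ∈ N.centralizerSet := by
  refine ⟨hx, fun y hy => ?_⟩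
  have hcomm := VonNeumannAlgebra.mem_commutant_iff.1 hxV _ (N.V_mul_mul_V_mem hy)
  have hVx : N.V (x N.Ω) = x N.Ω := by
    simpa [N.V_Ω] using congr($(commute_V_of_mul_V_mem_commutant hx hxV) N.Ω)
  have hΩ : N.V (y (x N.Ω)) = x (y N.Ω) := by
    simpa [N.V_Ω, N.V_invol, hVx] using congr($hcomm N.Ω)
  rw [← hΩ, N.inner_Ω_V]

theorem mem_twistedCenter_iff :
    x ∈ N.twistedCenter ↔ x ∈ N.M ∧ x * N.V ∈ N.M.commutant := by
  refine and_congr_right fun hx =>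
    ⟨fun h => VonNeumannAlgebra.mem_commutant_iff.2 fun y hy => ?_, fun hxV => congrFun ?_⟩
  · ext ξ
    change y (x (N.V ξ)) = x (N.V (y ξ))
    rw [← h, ← h, N.tomita _ (star_mem hx) y hy]
  · refine Continuous.ext_on N.cyclic
      (N.continuous_J.comp ((star x).continuous.comp N.continuous_J)) (x * N.V).continuous ?_
    rintro _ ⟨y, hy, rfl⟩
    have hJ : N.J (star x N.Ω) = x N.Ω := by
      rw [← J_apply_Ω_of_mem_centralizerSet (mem_centralizerSet_of_mul_V_mem_commutant hx hxV),
        N.J_invol]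
    calc N.J (star x (N.J (y N.Ω))) = y (N.J (star x (N.J N.Ω))) :=
          N.tomita _ (star_mem hx) y hy N.Ω
      _ = (y * (x * N.V)) N.Ω := by simp [N.J_Ω, N.V_Ω, hJ]
      _ = (x * N.V) (y N.Ω) := by
        rw [VonNeumannAlgebra.mem_commutant_iff.1 hxV y hy]; rfl

theorem commute_V_of_mem_twistedCenter (hx : x ∈ N.twistedCenter) : Commute N.V x :=
  commute_V_of_mul_V_mem_commutant hx.1 (mem_twistedCenter_iff.1 hx).2

theorem star_mul_V_mul_mul_V (hx : x ∈ N.twistedCenter) :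
    star (x * N.V) * (x * N.V) = star x * x := by
  rw [← (commute_V_of_mem_twistedCenter hx).eq, star_mul, N.V_star, mul_assoc, ← mul_assoc N.V,
    N.V_mul_V, one_mul]

theorem commute_V_abs {m : H →L[ℂ] H} (hx : x ∈ N.twistedCenter) (hm : m.IsPositive)
    (hmm : m * m = star x * x) : Commute N.V m := by
  have hVx := commute_V_of_mem_twistedCenter hx
  have hVx' : Commute N.V (star x) := by simpa [N.V_star] using hVx.star_star
  exact (commute_of_nonneg_of_commute_mul_self (m.nonneg_iff_isPositive.2 hm)
    (hmm ▸ (hVx'.mul_right hVx).symm)).symm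

theorem abs_mem_centerSet_inter_gammaFixed {m : H →L[ℂ] H} (hx : x ∈ N.twistedCenter)
    (hm : m.IsPositive) (hmm : m * m = star x * x) : m ∈ N.centerSet ∩ N.gammaFixed := by
  obtain ⟨hxM, hxV⟩ := mem_twistedCenter_iff.1 hx
  have hmM : m ∈ N.M := mem_of_isPositive_of_mul_self_mem N.M hm
    (hmm ▸ mul_mem (star_mem hxM) hxM)
  have hmM' : m ∈ N.M.commutant := mem_of_isPositive_of_mul_self_mem N.M.commutant hm
    (hmm ▸ star_mul_V_mul_mul_V hx ▸ mul_mem (star_mem hxV) hxV)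
  exact ⟨mem_centerSet_iff.2 ⟨hmM, hmM'⟩, hmM, fun ξ => by
    simpa [N.V_invol] using congr($(commute_V_abs hx hm hmm) (N.V ξ))⟩

theorem polar_factor_mem_twistedCenter {u m : H →L[ℂ] H} (hx : x ∈ N.twistedCenter)
    (hm : m.IsPositive) (hmm : m * m = star x * x) (hxu : x = u * m)
    (hu : ∀ ξ, m ξ = 0 → u ξ = 0) : u ∈ N.twistedCenter := by
  obtain ⟨hxM, hxV⟩ := mem_twistedCenter_iff.1 hx
  have hVm := commute_V_abs hx hm hmm
  have hpolar : x * N.V = u * N.V * m := by rw [hxu, mul_assoc, ← hVm.eq, mul_assoc]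
  refine mem_twistedCenter_iff.2 ⟨polar_factor_mem N.M hxM hm hmm hxu hu,
    polar_factor_mem N.M.commutant hxV hm (hmm.trans (star_mul_V_mul_mul_V hx).symm) hpolar
      fun ξ hξ => hu _ ?_⟩
  have hmV : m (N.V ξ) = N.V (m ξ) := congr($hVm.eq.symm ξ)
  exact hmV.trans (by rw [hξ, map_zero])

theorem mul_V_mem_commutant_of_conj_eq {u : H →L[ℂ] H} (huM : u ∈ N.M) (hu : star u * u = 1)
    (hu' : u * star u = 1) (hinner : ∀ y ∈ N.M, N.V * y * N.V = u * y * star u) :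
    u * N.V ∈ N.M.commutant := by
  have hVu : N.V * u = u * N.V := by
    have h := hinner u huM
    rw [mul_assoc u u, hu', mul_one] at h
    calc N.V * u = N.V * u * N.V * N.V := by rw [mul_assoc _ N.V N.V, N.V_mul_V, mul_one]
      _ = u * N.V := by rw [h]
  refine VonNeumannAlgebra.mem_commutant_iff.2 fun y hy => ?_
  rw [← hVu]
  calc y * (N.V * u) = N.V * (N.V * y * N.V) * u := by
        simp only [← mul_assoc, N.V_mul_V, one_mul]
    _ = N.V * (u * y) * (star u * u) := by rw [hinner y hy]; simp only [mul_assoc]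
    _ = N.V * u * y := by rw [hu, mul_one, mul_assoc]

theorem twistedCenter_eq_image_centerSet {u : H →L[ℂ] H} (hu : star u * u = 1)
    (huZ : u ∈ N.twistedCenter) : N.twistedCenter = (u * ·) '' N.centerSet := by
  obtain ⟨huM, huV⟩ := mem_twistedCenter_iff.1 huZ
  ext x
  constructor
  · intro hx
    obtain ⟨hxM, hxV⟩ := mem_twistedCenter_iff.1 hx
    have hxu : x * star u ∈ N.M.commutant := by
      have h := mul_mem hxV (star_mem huV)
      rwa [star_mul, N.V_star, mul_assoc, ← mul_assoc N.V, N.V_mul_V, one_mul] at h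
    refine ⟨x * star u, mem_centerSet_iff.2 ⟨mul_mem hxM (star_mem huM), hxu⟩, ?_⟩
    calc u * (x * star u) = x * star u * u := VonNeumannAlgebra.mem_commutant_iff.1 hxu u huM
      _ = x := by rw [mul_assoc, hu, mul_one]
  · rintro ⟨z, hz, rfl⟩
    obtain ⟨hzM, hzM'⟩ := mem_centerSet_iff.1 hz
    refine mem_twistedCenter_iff.2 ⟨mul_mem huM hzM, ?_⟩
    have hzu : u * z = z * u := VonNeumannAlgebra.mem_commutant_iff.1 hzM' u huM
    simpa only [hzu, mul_assoc] using mul_mem hzM' huV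

end TwistedCenter

end GradedVN

/-- (i) If `x ∈ Z(M, V)` has polar decomposition `x = u |x|` (characterized
by `|x|` positive with `|x|² = x* x`, `x = u |x|` and `u` vanishing on `ker |x|`), then
`u ∈ Z(M, V)` and `|x| ∈ Z(M)^γ`. (ii) If `Ad_V` is inner on `M`, implemented by a
unitary `u ∈ M`, then `Z(M, V) = u · Z(M)`. -/
theorem twisted_center_polar_and_inner {H : Type*} [NormedAddCommGroup H]
    [InnerProductSpace ℂ H] [CompleteSpace H] (N : GradedVN H) :
    (∀ x ∈ N.twistedCenter, ∀ u m : H →L[ℂ] H,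
      m.IsPositive → m * m = star x * x → x = u * m → (∀ ξ, m ξ = 0 → u ξ = 0) →
      u ∈ N.twistedCenter ∧ m ∈ N.centerSet ∩ N.gammaFixed) ∧
    (∀ u : H →L[ℂ] H, u ∈ N.M → star u * u = 1 → u * star u = 1 →
      (∀ y ∈ N.M, N.V * y * N.V = u * y * star u) →
      N.twistedCenter = (fun z => u * z) '' N.centerSet) := by
  refine ⟨fun x hx u m hm hmm hxu hu => ?_, fun u huM hu hu' hinner => ?_⟩
  · exact ⟨GradedVN.polar_factor_mem_twistedCenter hx hm hmm hxu hu,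
      GradedVN.abs_mem_centerSet_inter_gammaFixed hx hm hmm⟩
  · have huV : u * N.V ∈ N.M.commutant := GradedVN.mul_V_mem_commutant_of_conj_eq huM hu hu' hinner
    exact GradedVN.twistedCenter_eq_image_centerSet hu
      (GradedVN.mem_twistedCenter_iff.2 ⟨huM, huV⟩)

end
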